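/- Let N > K ≥ 1 and fix X ∈ 𝔾_N. Then for every partition ν ∈ 𝕐(K) one has Σ_{Y ∈ 𝔾_K} Λ^N_K(X,Y) · S̃_{ν|K}(Y) = S̃_{ν|N}(X), the series converging absolutely. -/

import Mathlib

open scoped BigOperators
open Classical

noncomputable section

def Lambda (q zm zp : ℝ) : Set ℝ :=
  {x | ∃ m : ℤ, x = zm * q ^ m} ∪ {x | ∃ n : ℤ, x = zp * q ^ n}

def qInterval (q zm zp a b : ℝ) : Set ℝ :=
  if b < 0 then Set.Ico a b ∩ Lambda q zm zp
  else if a < 0 then Set.Icc a b ∩ Lambda q zm zp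
  else Set.Ioc a b ∩ Lambda q zm zp

def Conf (q zm zp : ℝ) (N : ℕ) : Type :=
  {x : Fin N → ℝ // StrictMono x ∧ ∀ i, x i ∈ Lambda q zm zp}

def Interlaces (q zm zp : ℝ) {N : ℕ} (Y : Conf q zm zp N) (X : Conf q zm zp (N+1)) : Prop :=
  ∀ i : Fin N, Y.1 i ∈ qInterval q zm zp (X.1 i.castSucc) (X.1 i.succ)

def vprod {N : ℕ} (x : Fin N → ℝ) : ℝ :=
  ∏ p ∈ Finset.univ.filter (fun p : Fin N × Fin N => p.1 < p.2), (x p.2 - x p.1)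

def qpochR (a q : ℝ) (n : ℕ) : ℝ := ∏ m ∈ Finset.range n, (1 - a * q ^ m)

def qlink (q zm zp : ℝ) (N : ℕ) (X : Conf q zm zp (N+1)) (Y : Conf q zm zp N) : ℝ :=
  if Interlaces q zm zp Y X then
    (∏ i, |Y.1 i|) * qpochR q q N * vprod Y.1 / vprod X.1
  else 0

/-- The multi-step link Λ^{K+d}_K, the composition of one-step q-links. -/
def linkPow (q zm zp : ℝ) (K : ℕ) : (d : ℕ) → Conf q zm zp (K + d) → Conf q zm zp K → ℝ
  | 0, X, Y => if X = Y then 1 else 0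
  | (d+1), X, Y =>
      ∑' Z : Conf q zm zp (K + d), qlink q zm zp (K + d) X Z * linkPow q zm zp K d Z Y

/-- The Schur Laurent polynomial S_{λ|N}(u) = det[u_j^{λ_i+N−i}] / ∏_{i<j}(u_i−u_j). -/
def schurL (N : ℕ) (l : Fin N → ℤ) (u : Fin N → ℝ) : ℝ :=
  (Matrix.of fun i j : Fin N => u j ^ (l i + (N : ℤ) - 1 - (i : ℕ))).det /
    ∏ p ∈ Finset.univ.filter (fun p : Fin N × Fin N => p.1 < p.2), (u p.1 - u p.2)

/-- Normalized Schur polynomial S̃_{ν|N}(y) = S_{ν|N}(y)/S_{ν|N}(1,q,…,q^{N−1}). -/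
def schurTilde (q : ℝ) (N : ℕ) (l : Fin N → ℤ) (y : Fin N → ℝ) : ℝ :=
  schurL N l y / schurL N l (fun i => q ^ (i : ℕ))

/-- A signature of length K padded by zeros to length N. -/
def padSig (K N : ℕ) (ν : Fin K → ℤ) : Fin N → ℤ :=
  fun i => if h : (i : ℕ) < K then ν ⟨i, h⟩ else 0

/-!
Write Schur polynomials as ratios `s_e(u) = det [u_j ^ {e_i}] / V(u)` with increasing exponents
`e_i`; appending a zero part to the partition replaces `e` by `(0, e_1 + 1, …, e_N + 1)`.

Since `|y| y ^ m = sgn(y) y ^ (m + 1)`, summing over a `q`-interval `I(a, b)` gives a difference of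
two geometric series, `(b ^ (m + 1) - a ^ (m + 1)) / (1 - q ^ (m + 1))`. The interlacing condition
is a product of interval conditions, so the sum over `Y ≺ X` can be taken column by column inside
the determinant; the resulting determinant of differences is the alternant of `X` for the extended
exponents, by column operations. This gives the one-step relation up to a constant, which is the
ratio of the values of the two Schur polynomials at `u_j = q ^ j`.

For `e = (0, 1, …, N - 1)` the relation says that the link is stochastic. It then preserves bounds,
so `s_e` is bounded on bounded configurations by induction on `N`, after factoring `∏ u_j ^ {e_0}`
out of `s_e`. Since links do not leave bounded sets, Fubini applies to multi-step links.
-/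

section Alternant

variable {R : Type*} [CommRing R] {N : ℕ}

/-- The alternant `det [u_j ^ {e_i}]`, the numerator of a Schur polynomial. We use it with
increasing exponents, the reverse of the order in `schurL`, which avoids all signs. -/
def alternant (e : Fin N → ℕ) (u : Fin N → R) : R :=
  (Matrix.of fun i j => u j ^ e i).det

/-- The exponents of the alternant of `N + 1` variables attached to a partition, given its
exponents `e` in `N` variables. -/
def padExponents (e : Fin N → ℕ) : Fin (N + 1) → ℕ :=
  Fin.cons 0 fun i => e i + 1

lemma padExponents_val : padExponents (Fin.val : Fin N → ℕ) = Fin.val := by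
  funext i
  cases i using Fin.cases <;> simp [padExponents]

lemma exists_eq_padExponents_add {e : Fin (N + 1) → ℕ} (he : StrictMono e) :
    ∃ (e' : Fin N → ℕ) (c : ℕ), StrictMono e' ∧ e = fun i => padExponents e' i + c := by
  have h_pos (i : Fin N) : e 0 < e i.succ := he i.succ_pos
  refine ⟨fun i => e i.succ - e 0 - 1, e 0, fun i j hij => ?_, funext fun i => ?_⟩
  · have := he (Fin.succ_lt_succ_iff.2 hij)
    grind
  · cases i using Fin.cases with
    | zero => simp [padExponents]
    | succ i =>
      have := h_pos i
      simp only [padExponents, Fin.cons_succ]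
      omega

lemma alternant_add_const (e : Fin N → ℕ) (c : ℕ) (u : Fin N → R) :
    alternant (fun i => e i + c) u = (∏ j, u j) ^ c * alternant e u := by
  rw [alternant, alternant, ← Finset.prod_pow, ← Matrix.det_mul_row]
  congr 1
  ext i j
  simp only [Matrix.of_apply, pow_add, mul_comm]

lemma alternant_padExponents (e : Fin N → ℕ) (u : Fin (N + 1) → R) :
    alternant (padExponents e) u =
      (Matrix.of fun i j => u j.succ ^ (e i + 1) - u j.castSucc ^ (e i + 1)).det := by
  -- Subtracting from each column the preceding one turns the first row into `(1, 0, …, 0)`.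
  let B : Matrix (Fin (N + 1)) (Fin (N + 1)) R := Matrix.of fun i =>
    Fin.cons (u 0 ^ padExponents e i) fun j =>
      u j.succ ^ padExponents e i - u j.castSucc ^ padExponents e i
  have h_columns : alternant (padExponents e) u = B.det :=
    Matrix.det_eq_of_forall_col_eq_smul_add_pred (fun _ => 1) (by simp [B]) (by simp [B])
  rw [h_columns, Matrix.det_succ_row_zero, Fin.sum_univ_succ,
    Finset.sum_eq_zero (by simp [B, padExponents])]
  simp [B, padExponents, Matrix.submatrix]

lemma alternant_padExponents_geometric (q : R) (e : Fin N → ℕ) :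
    alternant (padExponents e) (fun j => q ^ (j : ℕ)) =
      (∏ i, (q ^ (e i + 1) - 1)) * (∏ j : Fin N, q ^ (j : ℕ)) *
        alternant e fun j => q ^ (j : ℕ) := by
  rw [alternant_padExponents, alternant, mul_assoc, ← Matrix.det_mul_row, ← Matrix.det_mul_column]
  congr 1
  ext i j
  simp only [Matrix.of_apply, Fin.val_succ, Fin.val_castSucc]
  ring

lemma alternant_val (u : Fin N → ℝ) : alternant Fin.val u = vprod u := by
  have h_transpose : alternant Fin.val u = (Matrix.vandermonde u).transpose.det := rfl
  rw [h_transpose, Matrix.det_transpose, Matrix.det_vandermonde, vprod, Finset.prod_filter,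
    Fintype.prod_prod_type]
  simp only [← Finset.prod_filter, Finset.filter_lt_eq_Ioi]

lemma vprod_pos {u : Fin N → ℝ} (hu : StrictMono u) : 0 < vprod u :=
  Finset.prod_pos fun _ hp => sub_pos.2 (hu (Finset.mem_filter.1 hp).2)

/-- The ratio of an alternant to the Vandermonde product: the Schur polynomial whose parts are
`e i - i`, in reverse order. -/
def bialternant (e : Fin N → ℕ) (u : Fin N → ℝ) : ℝ :=
  alternant e u / vprod u

lemma bialternant_val {u : Fin N → ℝ} (hu : StrictMono u) : bialternant Fin.val u = 1 := by
  rw [bialternant, alternant_val, div_self (vprod_pos hu).ne']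

lemma bialternant_add_const (e : Fin N → ℕ) (c : ℕ) (u : Fin N → ℝ) :
    bialternant (fun i => e i + c) u = (∏ j, u j) ^ c * bialternant e u := by
  rw [bialternant, alternant_add_const, mul_div_assoc, bialternant]

lemma bialternant_padExponents_geometric {q : ℝ} (hq : q ≠ 0) (e : Fin N → ℕ) :
    bialternant (padExponents e) (fun j => q ^ (j : ℕ)) =
      (∏ i, (1 - q ^ (e i + 1)) / (1 - q ^ ((i : ℕ) + 1))) *
        bialternant e fun j => q ^ (j : ℕ) := by
  have h_ne : ∏ j : Fin N, q ^ (j : ℕ) ≠ 0 := Finset.prod_ne_zero_iff.2 fun _ _ => pow_ne_zero _ hq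
  have h_val := alternant_padExponents_geometric q (Fin.val : Fin N → ℕ)
  rw [padExponents_val] at h_val
  rw [bialternant, bialternant, ← alternant_val, ← alternant_val, alternant_padExponents_geometric,
    h_val, mul_div_mul_comm, mul_div_mul_right _ _ h_ne, ← Finset.prod_div_distrib]
  congr 2 with i
  rw [← neg_sub, ← neg_sub 1, neg_div_neg_eq]

/-- The exponents `λ_i + N - i` of a signature with nonnegative entries, in increasing order. -/
def shiftedExponents (l : Fin N → ℤ) : Fin N → ℕ :=
  fun i => (l i.rev).toNat + i

lemma shiftedExponents_strictMono {l : Fin N → ℤ} (hl : Antitone l) :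
    StrictMono (shiftedExponents l) := fun _ _ hij =>
  add_lt_add_of_le_of_lt (Int.toNat_le_toNat (hl (Fin.rev_le_rev.2 hij.le))) hij

lemma schurL_eq_bialternant {l : Fin N → ℤ} (hl : ∀ i, 0 ≤ l i) (u : Fin N → ℝ) :
    schurL N l u = bialternant (shiftedExponents l) u := by
  -- Reversing the order of the rows multiplies numerator and denominator by the same sign.
  have h_num : (Matrix.of fun i j : Fin N => u j ^ (l i + (N : ℤ) - 1 - (i : ℕ))).det =
      Equiv.Perm.sign (Fin.revPerm : Equiv.Perm (Fin N)) * alternant (shiftedExponents l) u := by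
    rw [alternant, ← Matrix.det_permute]
    congr 1
    ext i j
    have h_exp : l i + (N : ℤ) - 1 - (i : ℕ) = (shiftedExponents l i.rev : ℕ) := by
      have := hl i
      simp only [shiftedExponents, Fin.rev_rev, Fin.val_rev]
      omega
    simp [h_exp]
  have h_den : ∏ p ∈ Finset.univ.filter (fun p : Fin N × Fin N => p.1 < p.2), (u p.1 - u p.2) =
      Equiv.Perm.sign (Fin.revPerm : Equiv.Perm (Fin N)) * vprod u := by
    have h_proj : Matrix.projVandermonde (fun _ => 1) u =
        (Matrix.vandermonde u).submatrix id Fin.revPerm := by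
      ext i j
      simp [Matrix.projVandermonde_apply]
    have h_det := Matrix.det_projVandermonde (fun _ => 1) u
    rw [h_proj, Matrix.det_permute', ← Matrix.det_transpose] at h_det
    rw [← alternant_val]
    refine Eq.trans ?_ h_det.symm
    rw [Finset.prod_filter, Fintype.prod_prod_type]
    simp only [one_mul, ← Finset.prod_filter, Finset.filter_lt_eq_Ioi]
  rw [schurL, h_num, h_den, bialternant, mul_div_mul_left _ _ (by simp)]

end Alternant

section Padding

variable {K : ℕ} {ν : Fin K → ℤ}

lemma padSig_self : padSig K K ν = ν := by
  funext i
  simp [padSig]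

lemma padSig_nonneg (hν : ∀ i, 0 ≤ ν i) (N : ℕ) (i : Fin N) : 0 ≤ padSig K N ν i := by
  unfold padSig
  split_ifs
  exacts [hν _, le_rfl]

lemma shiftedExponents_padSig_succ {N : ℕ} (hN : K ≤ N) :
    shiftedExponents (padSig K (N + 1) ν) = padExponents (shiftedExponents (padSig K N ν)) := by
  funext i
  cases i using Fin.cases with
  | zero => simp [shiftedExponents, padExponents, padSig, hN.not_gt]
  | succ i => simp [shiftedExponents, padExponents, padSig, Fin.rev_succ, add_assoc]

end Padding

section ProductSeries

variable {R ι β γ : Type*} [NormedCommRing R] [NormedAlgebra ℝ R] [FiniteDimensional ℝ R]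

lemma hasSum_mul_of_finiteDimensional {f : β → R} {g : γ → R} {s t : R} (hf : HasSum f s)
    (hg : HasSum g t) : HasSum (fun p : β × γ => f p.1 * g p.2) (s * t) := by
  have : CompleteSpace R := FiniteDimensional.complete ℝ R
  exact hf.mul hg (summable_mul_of_summable_norm hf.summable.norm hg.summable.norm)

lemma hasSum_prod_fin {N : ℕ} {f : Fin N → β → R} {s : Fin N → R} (hf : ∀ i, HasSum (f i) (s i)) :
    HasSum (fun y : Fin N → β => ∏ i, f i (y i)) (∏ i, s i) := by
  induction N with
  | zero => simp
  | succ N ih =>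
    have h_mul := hasSum_mul_of_finiteDimensional (hf 0) (ih fun i => hf i.succ)
    rw [← (Fin.consEquiv fun _ : Fin (N + 1) => β).hasSum_iff, Fin.prod_univ_succ]
    convert h_mul using 1
    funext p
    simp [Fin.prod_univ_succ, Fin.consEquiv]

lemma hasSum_prod_pi [Fintype ι] {f : ι → β → R} {s : ι → R} (hf : ∀ i, HasSum (f i) (s i)) :
    HasSum (fun y : ι → β => ∏ i, f i (y i)) (∏ i, s i) := by
  let φ := Fintype.equivFin ι
  rw [← (φ.arrowCongr (Equiv.refl β)).symm.hasSum_iff, ← φ.symm.prod_comp]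
  convert hasSum_prod_fin fun i => hf (φ.symm i) using 2 with y
  simp [← φ.symm.prod_comp, φ]

lemma hasSum_det [Fintype ι] [DecidableEq ι] {f : ι → ι → β → R} {s : ι → ι → R}
    (hf : ∀ i j, HasSum (f i j) (s i j)) :
    HasSum (fun y : ι → β => (Matrix.of fun i j => f i j (y j)).det) (Matrix.of s).det := by
  simp only [Matrix.det_apply, Matrix.of_apply]
  exact hasSum_sum fun σ _ => (hasSum_prod_pi fun j => hf (σ j) j).const_smul _

end ProductSeries

section Stochastic

variable {α β γ : Type*}

/-- A stochastic matrix, with rows and columns indexed by arbitrary types: the entries are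
nonnegative and every row sums to `1`. -/
structure IsStochastic (L : α → β → ℝ) : Prop where
  nonneg : ∀ a b, 0 ≤ L a b
  hasSum_one : ∀ a, HasSum (L a) 1

namespace IsStochastic

variable {L : α → β → ℝ} {P : β → γ → ℝ}

lemma abs_le (hL : IsStochastic L) {a : α} {f : β → ℝ} {s C : ℝ}
    (hs : HasSum (fun b => L a b * f b) s) (hf : ∀ b, L a b ≠ 0 → |f b| ≤ C) : |s| ≤ C := by
  have h_bound : HasSum (fun b => L a b * C) C := by
    simpa using (hL.hasSum_one a).mul_right C
  rw [← hs.tsum_eq, ← Real.norm_eq_abs]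
  refine tsum_of_norm_bounded h_bound fun b => ?_
  rw [norm_mul, Real.norm_of_nonneg (hL.nonneg a b), Real.norm_eq_abs]
  obtain h | h := eq_or_ne (L a b) 0
  · simp [h]
  · exact mul_le_mul_of_nonneg_left (hf b h) (hL.nonneg a b)

lemma summable_prod (hL : IsStochastic L) (hP : IsStochastic P) (a : α) :
    Summable fun p : β × γ => L a p.1 * P p.1 p.2 := by
  have h_nonneg : 0 ≤ fun p : β × γ => L a p.1 * P p.1 p.2 :=
    fun p => mul_nonneg (hL.nonneg a p.1) (hP.nonneg p.1 p.2)
  have h_row (b : β) : HasSum (fun c => L a b * P b c) (L a b) := by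
    simpa using (hP.hasSum_one b).mul_left (L a b)
  refine (summable_prod_of_nonneg h_nonneg).2 ⟨fun b => (h_row b).summable, ?_⟩
  simpa only [(h_row _).tsum_eq] using (hL.hasSum_one a).summable

lemma hasSum_comp_mul (hL : IsStochastic L) (hP : IsStochastic P) {a : α} {f : γ → ℝ} {g : β → ℝ}
    {s C : ℝ} (hf : ∀ b c, L a b ≠ 0 → P b c ≠ 0 → |f c| ≤ C)
    (hg : ∀ b, HasSum (fun c => P b c * f c) (g b)) (hs : HasSum (fun b => L a b * g b) s) :
    HasSum (fun c => (∑' b, L a b * P b c) * f c) s := by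
  have h_weights := hL.summable_prod hP a
  have h_summable : Summable fun p : β × γ => L a p.1 * (P p.1 p.2 * f p.2) := by
    refine (h_weights.mul_right C).of_norm_bounded fun ⟨b, c⟩ => ?_
    have h_nonneg := mul_nonneg (hL.nonneg a b) (hP.nonneg b c)
    rw [← mul_assoc, norm_mul, Real.norm_of_nonneg h_nonneg, Real.norm_eq_abs]
    obtain h | h := eq_or_ne (L a b * P b c) 0
    · simp [h]
    · exact mul_le_mul_of_nonneg_left
        (hf b c (left_ne_zero_of_mul h) (right_ne_zero_of_mul h)) h_nonneg
  obtain ⟨t, ht⟩ := h_summable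
  obtain rfl : s = t := hs.unique (ht.prod_fiberwise fun b => (hg b).mul_left _)
  refine ((Equiv.prodComm γ β).hasSum_iff.2 ht).prod_fiberwise fun c => ?_
  have h_column : Summable fun b => L a b * P b c :=
    h_weights.comp_injective (Prod.mk_left_injective c)
  simpa [mul_assoc] using h_column.hasSum.mul_right (f c)

lemma comp (hL : IsStochastic L) (hP : IsStochastic P) :
    IsStochastic fun a c => ∑' b, L a b * P b c where
  nonneg _ _ := tsum_nonneg fun _ => mul_nonneg (hL.nonneg _ _) (hP.nonneg _ _)
  hasSum_one a := by
    have h_comp := hL.hasSum_comp_mul hP (a := a) (f := fun _ => 1) (g := fun _ => 1) (s := 1)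
      (C := 1) (by simp) (by simpa using hP.hasSum_one) (by simpa using hL.hasSum_one a)
    simpa using h_comp

end IsStochastic

end Stochastic

section Lattice

variable {q zm zp : ℝ}

lemma ne_zero_of_mem_Lambda (hq0 : 0 < q) (hzm : zm < 0) (hzp : 0 < zp) {y : ℝ}
    (hy : y ∈ Lambda q zm zp) : y ≠ 0 := by
  obtain ⟨m, rfl⟩ | ⟨m, rfl⟩ := hy
  exacts [mul_ne_zero hzm.ne (zpow_pos hq0 m).ne', mul_ne_zero hzp.ne' (zpow_pos hq0 m).ne']

lemma mul_pow_mem_Lambda (hq0 : q ≠ 0) {y : ℝ} (hy : y ∈ Lambda q zm zp) (k : ℕ) :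
    y * q ^ k ∈ Lambda q zm zp := by
  obtain ⟨m, rfl⟩ | ⟨m, rfl⟩ := hy
  exacts [Or.inl ⟨m + k, by rw [zpow_add₀ hq0, zpow_natCast, mul_assoc]⟩,
    Or.inr ⟨m + k, by rw [zpow_add₀ hq0, zpow_natCast, mul_assoc]⟩]

lemma mul_zpow_mem_range_mul_pow (hq0 : 0 < q) (hq1 : q < 1) {z : ℝ} (hz : z ≠ 0) {m n : ℤ}
    (h : |z * q ^ m| ≤ |z * q ^ n|) : z * q ^ m ∈ Set.range fun k : ℕ => z * q ^ n * q ^ k := by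
  rw [abs_mul, abs_mul, abs_of_pos (zpow_pos hq0 m), abs_of_pos (zpow_pos hq0 n),
    mul_le_mul_iff_right₀ (abs_pos.2 hz), (zpow_right_strictAnti₀ hq0 hq1).le_iff_ge] at h
  obtain ⟨k, rfl⟩ := Int.le.dest h
  exact ⟨k, by simp only [zpow_add₀ hq0.ne', zpow_natCast, mul_assoc]⟩

lemma mem_range_mul_pow_iff (hq0 : 0 < q) (hq1 : q < 1) (hzm : zm < 0) (hzp : 0 < zp) {b y : ℝ}
    (hb : b ∈ Lambda q zm zp) :
    (y ∈ Set.range fun k : ℕ => b * q ^ k) ↔ y ∈ Lambda q zm zp ∧ 0 < b * y ∧ |y| ≤ |b| := by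
  constructor
  · rintro ⟨k, rfl⟩
    have hb0 := ne_zero_of_mem_Lambda hq0 hzm hzp hb
    refine ⟨mul_pow_mem_Lambda hq0.ne' hb k, ?_, ?_⟩
    · rw [← mul_assoc]
      exact mul_pos (mul_self_pos.2 hb0) (pow_pos hq0 k)
    · rw [abs_mul, abs_of_pos (pow_pos hq0 k)]
      exact mul_le_of_le_one_right (abs_nonneg b) (pow_le_one₀ hq0.le hq1.le)
  · rintro ⟨hy, h_sign, h_abs⟩
    have h_neg (n : ℤ) : zm * q ^ n < 0 := mul_neg_of_neg_of_pos hzm (zpow_pos hq0 n)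
    have h_pos (n : ℤ) : 0 < zp * q ^ n := mul_pos hzp (zpow_pos hq0 n)
    obtain ⟨n, rfl⟩ | ⟨n, rfl⟩ := hb <;> obtain ⟨m, rfl⟩ | ⟨m, rfl⟩ := hy
    · exact mul_zpow_mem_range_mul_pow hq0 hq1 hzm.ne h_abs
    · exact absurd h_sign (mul_neg_of_neg_of_pos (h_neg n) (h_pos m)).not_gt
    · exact absurd h_sign (mul_neg_of_pos_of_neg (h_pos n) (h_neg m)).not_gt
    · exact mul_zpow_mem_range_mul_pow hq0 hq1 hzp.ne' h_abs

lemma hasSum_indicator_range_mul_pow (hq0 : 0 < q) (hq1 : q < 1) {b : ℝ} (hb : b ≠ 0) {n : ℕ}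
    (hn : n ≠ 0) :
    HasSum (Set.indicator (Set.range fun k : ℕ => b * q ^ k) fun y => y ^ n)
      (b ^ n / (1 - q ^ n)) := by
  have h_inj : Function.Injective fun k : ℕ => b * q ^ k :=
    (mul_right_injective₀ hb).comp (pow_right_strictAnti₀ hq0 hq1).injective
  have h_geom := (hasSum_geometric_of_lt_one (pow_nonneg hq0.le n)
    (pow_lt_one₀ hq0.le hq1 hn)).mul_left (b ^ n)
  rw [← hasSum_subtype_iff_indicator]
  refine (h_inj.hasSum_range_iff (f := fun y => y ^ n)).2 ?_
  simpa only [Function.comp_def, mul_pow, pow_right_comm, div_eq_mul_inv] using h_geom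

lemma indicator_qInterval (hq0 : 0 < q) (hq1 : q < 1) (hzm : zm < 0) (hzp : 0 < zp) {a b : ℝ}
    (ha : a ∈ Lambda q zm zp) (hb : b ∈ Lambda q zm zp) (hab : a < b) (m : ℕ) (y : ℝ) :
    Set.indicator (qInterval q zm zp a b) (fun y => |y| * y ^ m) y =
      Set.indicator (Set.range fun k : ℕ => b * q ^ k) (fun y => y ^ (m + 1)) y -
        Set.indicator (Set.range fun k : ℕ => a * q ^ k) (fun y => y ^ (m + 1)) y := by
  have ha0 := ne_zero_of_mem_Lambda hq0 hzm hzp ha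
  have hb0 := ne_zero_of_mem_Lambda hq0 hzm hzp hb
  simp only [Set.indicator_apply, mem_range_mul_pow_iff hq0 hq1 hzm hzp ha,
    mem_range_mul_pow_iff hq0 hq1 hzm hzp hb]
  by_cases hy : y ∈ Lambda q zm zp
  · have hy0 := ne_zero_of_mem_Lambda hq0 hzm hzp hy
    simp only [hy, true_and, qInterval, pow_succ, mul_pos_iff]
    grind
  · have : y ∉ qInterval q zm zp a b := by grind [qInterval]
    simp [hy, this]

lemma hasSum_indicator_qInterval (hq0 : 0 < q) (hq1 : q < 1) (hzm : zm < 0) (hzp : 0 < zp)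
    {a b : ℝ} (ha : a ∈ Lambda q zm zp) (hb : b ∈ Lambda q zm zp) (hab : a < b) (m : ℕ) :
    HasSum (Set.indicator (qInterval q zm zp a b) fun y => |y| * y ^ m)
      ((b ^ (m + 1) - a ^ (m + 1)) / (1 - q ^ (m + 1))) := by
  rw [funext (indicator_qInterval hq0 hq1 hzm hzp ha hb hab m), sub_div]
  exact (hasSum_indicator_range_mul_pow hq0 hq1 (ne_zero_of_mem_Lambda hq0 hzm hzp hb)
    m.succ_ne_zero).sub (hasSum_indicator_range_mul_pow hq0 hq1
      (ne_zero_of_mem_Lambda hq0 hzm hzp ha) m.succ_ne_zero)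

lemma qInterval_subset {a b : ℝ} : qInterval q zm zp a b ⊆ Set.Icc a b ∩ Lambda q zm zp := by
  unfold qInterval
  split_ifs
  exacts [Set.inter_subset_inter_left _ Set.Ico_subset_Icc_self, subset_rfl,
    Set.inter_subset_inter_left _ Set.Ioc_subset_Icc_self]

lemma lt_of_mem_qInterval {a b c y z : ℝ} (hy : y ∈ qInterval q zm zp a b)
    (hz : z ∈ qInterval q zm zp b c) (hbc : b < c) : y < z := by
  grind [qInterval]

lemma strictMono_of_mem_qInterval {N : ℕ} {x : Fin (N + 1) → ℝ} (hx : StrictMono x) {y : Fin N → ℝ}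
    (hy : ∀ i, y i ∈ qInterval q zm zp (x i.castSucc) (x i.succ)) : StrictMono y := by
  cases N with
  | zero => exact Subsingleton.strictMono y
  | succ N =>
    refine Fin.strictMono_iff_lt_succ.2 fun i => ?_
    exact lt_of_mem_qInterval (hy i.castSucc) (hy i.succ) (hx i.succ.castSucc_lt_succ)

lemma Interlaces.norm_le {N : ℕ} {X : Conf q zm zp (N + 1)} {Y : Conf q zm zp N}
    (h : Interlaces q zm zp Y X) : ‖Y.1‖ ≤ ‖X.1‖ := by
  refine (pi_norm_le_iff_of_nonneg (norm_nonneg _)).2 fun i => ?_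
  obtain ⟨⟨h_left, h_right⟩, -⟩ := qInterval_subset (h i)
  exact (abs_le_max_abs_abs h_left h_right).trans
    (max_le (norm_le_pi_norm X.1 _) (norm_le_pi_norm X.1 _))

end Lattice

section Link

variable {q zm zp : ℝ}

lemma qlink_eq_zero {N : ℕ} {X : Conf q zm zp (N + 1)} {Y : Conf q zm zp N}
    (h : ¬ Interlaces q zm zp Y X) : qlink q zm zp N X Y = 0 :=
  if_neg h

lemma norm_le_of_qlink_ne_zero {N : ℕ} {X : Conf q zm zp (N + 1)} {Y : Conf q zm zp N}
    (h : qlink q zm zp N X Y ≠ 0) : ‖Y.1‖ ≤ ‖X.1‖ :=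
  (not_imp_comm.1 qlink_eq_zero h).norm_le

lemma one_sub_pow_succ_pos (hq0 : 0 < q) (hq1 : q < 1) (n : ℕ) : 0 < 1 - q ^ (n + 1) :=
  sub_pos.2 (pow_lt_one₀ hq0.le hq1 n.succ_ne_zero)

lemma qpochR_self (N : ℕ) : qpochR q q N = ∏ i : Fin N, (1 - q ^ ((i : ℕ) + 1)) := by
  simp only [qpochR, ← pow_succ', Finset.prod_range]

lemma qlink_nonneg (hq0 : 0 < q) (hq1 : q < 1) {N : ℕ} (X : Conf q zm zp (N + 1))
    (Y : Conf q zm zp N) : 0 ≤ qlink q zm zp N X Y := by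
  have h_poch : 0 ≤ qpochR q q N := by
    rw [qpochR_self]
    exact Finset.prod_nonneg fun i _ => (one_sub_pow_succ_pos hq0 hq1 i).le
  have hX := vprod_pos X.2.1
  have hY := vprod_pos Y.2.1
  unfold qlink
  split_ifs <;> positivity

lemma qlink_mul_bialternant {N : ℕ} (X : Conf q zm zp (N + 1)) (Y : Conf q zm zp N)
    (e : Fin N → ℕ) :
    qlink q zm zp N X Y * bialternant e Y.1 =
      qpochR q q N / vprod X.1 * (Matrix.of fun i j =>
        Set.indicator (qInterval q zm zp (X.1 j.castSucc) (X.1 j.succ))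
          (fun y => |y| * y ^ e i) (Y.1 j)).det := by
  by_cases hI : Interlaces q zm zp Y X
  · have h_det : (Matrix.of fun i j =>
        Set.indicator (qInterval q zm zp (X.1 j.castSucc) (X.1 j.succ))
          (fun y => |y| * y ^ e i) (Y.1 j)).det = (∏ j, |Y.1 j|) * alternant e Y.1 := by
      rw [alternant, ← Matrix.det_mul_row]
      congr 1
      ext i j
      simp only [Matrix.of_apply, Set.indicator_of_mem (hI j)]
    have hY := (vprod_pos Y.2.1).ne'
    rw [h_det, qlink, if_pos hI, bialternant]
    field_simp
  · obtain ⟨j, hj⟩ := not_forall.1 hI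
    rw [qlink_eq_zero hI, zero_mul,
      Matrix.det_eq_zero_of_column_eq_zero j fun i => by simp [hj], mul_zero]

variable (hq0 : 0 < q) (hq1 : q < 1) (hzm : zm < 0) (hzp : 0 < zp)

include hq0 hq1 hzm hzp

lemma hasSum_det_indicator_qInterval {N : ℕ} (X : Conf q zm zp (N + 1)) (e : Fin N → ℕ) :
    HasSum (fun Y : Conf q zm zp N => (Matrix.of fun i j =>
        Set.indicator (qInterval q zm zp (X.1 j.castSucc) (X.1 j.succ))
          (fun y => |y| * y ^ e i) (Y.1 j)).det)
      ((∏ i, (1 - q ^ (e i + 1)))⁻¹ * alternant (padExponents e) X.1) := by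
  have h_sum := hasSum_det fun i j : Fin N => hasSum_indicator_qInterval hq0 hq1 hzm hzp
    (X.2.2 j.castSucc) (X.2.2 j.succ) (X.2.1 Fin.castSucc_lt_succ) (e i)
  have h_value : (Matrix.of fun i j : Fin N =>
      (X.1 j.succ ^ (e i + 1) - X.1 j.castSucc ^ (e i + 1)) / (1 - q ^ (e i + 1))).det =
      (∏ i, (1 - q ^ (e i + 1)))⁻¹ * alternant (padExponents e) X.1 := by
    rw [alternant_padExponents, ← Finset.prod_inv_distrib, ← Matrix.det_mul_column]
    simp only [div_eq_inv_mul, Matrix.of_apply]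
  rw [← h_value]
  refine (hasSum_subtype_iff_of_support_subset fun y hy => ?_).2 h_sum
  have h_mem (j : Fin N) : y j ∈ qInterval q zm zp (X.1 j.castSucc) (X.1 j.succ) := by
    by_contra hj
    exact hy (Matrix.det_eq_zero_of_column_eq_zero j fun i => by simp [hj])
  exact ⟨strictMono_of_mem_qInterval X.2.1 h_mem, fun j => (qInterval_subset (h_mem j)).2⟩

lemma hasSum_qlink_mul_bialternant {N : ℕ} (X : Conf q zm zp (N + 1)) (e : Fin N → ℕ) :
    HasSum (fun Y => qlink q zm zp N X Y * bialternant e Y.1)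
      ((∏ i : Fin N, (1 - q ^ ((i : ℕ) + 1)) / (1 - q ^ (e i + 1))) *
        bialternant (padExponents e) X.1) := by
  have h_value : (∏ i : Fin N, (1 - q ^ ((i : ℕ) + 1)) / (1 - q ^ (e i + 1))) *
      bialternant (padExponents e) X.1 = qpochR q q N / vprod X.1 *
        ((∏ i, (1 - q ^ (e i + 1)))⁻¹ * alternant (padExponents e) X.1) := by
    rw [Finset.prod_div_distrib, qpochR_self, bialternant]
    ring
  rw [h_value, funext fun Y => qlink_mul_bialternant X Y e]
  exact (hasSum_det_indicator_qInterval hq0 hq1 hzm hzp X e).mul_left _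

lemma qlink_isStochastic (N : ℕ) : IsStochastic (qlink q zm zp N) where
  nonneg := qlink_nonneg hq0 hq1
  hasSum_one X := by
    have h_sum := hasSum_qlink_mul_bialternant hq0 hq1 hzm hzp X Fin.val
    have h_const : ∏ i : Fin N, (1 - q ^ ((i : ℕ) + 1)) / (1 - q ^ ((i : ℕ) + 1)) = 1 :=
      Finset.prod_eq_one fun i _ => div_self (one_sub_pow_succ_pos hq0 hq1 i).ne'
    rw [padExponents_val, bialternant_val X.2.1, h_const, mul_one] at h_sum
    simpa only [fun Y : Conf q zm zp N => bialternant_val Y.2.1, mul_one] using h_sum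

lemma exists_abs_bialternant_padExponents_le {N : ℕ} {e : Fin N → ℕ} {M C : ℝ}
    (hC : ∀ Y : Conf q zm zp N, ‖Y.1‖ ≤ M → |bialternant e Y.1| ≤ C) :
    ∃ C', ∀ X : Conf q zm zp (N + 1), ‖X.1‖ ≤ M → |bialternant (padExponents e) X.1| ≤ C' := by
  set c : ℝ := ∏ i : Fin N, (1 - q ^ ((i : ℕ) + 1)) / (1 - q ^ (e i + 1))
  have hc : 0 < c := Finset.prod_pos fun i _ =>
    div_pos (one_sub_pow_succ_pos hq0 hq1 i) (one_sub_pow_succ_pos hq0 hq1 (e i))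
  refine ⟨C / c, fun X hX => ?_⟩
  have h_le : |c * bialternant (padExponents e) X.1| ≤ C :=
    (qlink_isStochastic hq0 hq1 hzm hzp N).abs_le
      (hasSum_qlink_mul_bialternant hq0 hq1 hzm hzp X e)
      fun Y hY => hC Y ((norm_le_of_qlink_ne_zero hY).trans hX)
  rwa [abs_mul, abs_of_pos hc, ← le_div_iff₀' hc] at h_le

lemma exists_abs_bialternant_le (M : ℝ) {N : ℕ} {e : Fin N → ℕ} (he : StrictMono e) :
    ∃ C, ∀ X : Conf q zm zp N, ‖X.1‖ ≤ M → |bialternant e X.1| ≤ C := by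
  induction N with
  | zero => exact ⟨1, fun X _ => by simp [bialternant, alternant, vprod]⟩
  | succ N ih =>
    obtain ⟨e', c, he', rfl⟩ := exists_eq_padExponents_add he
    obtain ⟨C, hC⟩ := ih he'
    obtain ⟨C', hC'⟩ := exists_abs_bialternant_padExponents_le hq0 hq1 hzm hzp hC
    refine ⟨(M ^ (N + 1)) ^ c * C', fun X hX => ?_⟩
    have hM : 0 ≤ M := (norm_nonneg _).trans hX
    have h_prod : |∏ j, X.1 j| ≤ M ^ (N + 1) := by
      rw [Finset.abs_prod]
      exact (Finset.prod_le_prod (fun j _ => abs_nonneg _)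
        fun j _ => (norm_le_pi_norm X.1 j).trans hX).trans_eq (by simp)
    rw [bialternant_add_const, abs_mul, abs_pow]
    gcongr
    exact hC' X hX

lemma hasSum_qlink_mul_schurTilde {K N : ℕ} (hKN : K ≤ N) {ν : Fin K → ℤ} (hν : ∀ i, 0 ≤ ν i)
    (X : Conf q zm zp (N + 1)) :
    HasSum (fun Y => qlink q zm zp N X Y * schurTilde q N (padSig K N ν) Y.1)
      (schurTilde q (N + 1) (padSig K (N + 1) ν) X.1) := by
  set e := shiftedExponents (padSig K N ν)
  set c : ℝ := ∏ i, (1 - q ^ (e i + 1)) / (1 - q ^ ((i : ℕ) + 1))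
  have h_const : ∏ i : Fin N, (1 - q ^ ((i : ℕ) + 1)) / (1 - q ^ (e i + 1)) = c⁻¹ := by
    simp only [c, ← Finset.prod_inv_distrib, inv_div]
  have h_sum := (hasSum_qlink_mul_bialternant hq0 hq1 hzm hzp X e).div_const
    (bialternant e fun j => q ^ (j : ℕ))
  simp only [schurTilde, schurL_eq_bialternant (padSig_nonneg hν _),
    shiftedExponents_padSig_succ hKN, bialternant_padExponents_geometric hq0.ne']
  rw [h_const, inv_mul_eq_div, div_div] at h_sum
  simpa only [mul_div_assoc] using h_sum

end Link

section MultiStepLink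

variable {q zm zp : ℝ} {K : ℕ}

lemma hasSum_linkPow_zero_mul (X : Conf q zm zp K) (f : Conf q zm zp K → ℝ) :
    HasSum (fun Y => linkPow q zm zp K 0 X Y * f Y) (f X) := by
  simpa [linkPow] using hasSum_single (f := fun Y => linkPow q zm zp K 0 X Y * f Y) X
    fun Y hY => by simp [linkPow, hY.symm]

lemma norm_le_of_linkPow_ne_zero {d : ℕ} {X : Conf q zm zp (K + d)} {Y : Conf q zm zp K}
    (h : linkPow q zm zp K d X Y ≠ 0) : ‖Y.1‖ ≤ ‖X.1‖ := by
  induction d with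
  | zero =>
    obtain rfl : X = Y := by_contra fun hXY => h (if_neg hXY)
    rfl
  | succ d ih =>
    obtain ⟨Z, hZ⟩ : ∃ Z, qlink q zm zp (K + d) X Z * linkPow q zm zp K d Z Y ≠ 0 := by
      by_contra! h_zero
      exact h (by simp [linkPow, h_zero])
    exact (ih (right_ne_zero_of_mul hZ)).trans
      (norm_le_of_qlink_ne_zero (left_ne_zero_of_mul hZ))

variable (hq0 : 0 < q) (hq1 : q < 1) (hzm : zm < 0) (hzp : 0 < zp)

include hq0 hq1 hzm hzp

lemma linkPow_isStochastic (d : ℕ) : IsStochastic (linkPow q zm zp K d) := by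
  induction d with
  | zero =>
    exact ⟨fun X Y => by unfold linkPow; positivity,
      fun X => by simpa using hasSum_linkPow_zero_mul X fun _ => 1⟩
  | succ d ih => exact (qlink_isStochastic hq0 hq1 hzm hzp (K + d)).comp ih

lemma exists_abs_schurTilde_le (M : ℝ) {ν : Fin K → ℤ} (hmono : Antitone ν)
    (hpos : ∀ i, 0 ≤ ν i) :
    ∃ C, ∀ Y : Conf q zm zp K, ‖Y.1‖ ≤ M → |schurTilde q K ν Y.1| ≤ C := by
  obtain ⟨C, hC⟩ := exists_abs_bialternant_le hq0 hq1 hzm hzp M (shiftedExponents_strictMono hmono)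
  refine ⟨C / |schurL K ν fun i => q ^ (i : ℕ)|, fun Y hY => ?_⟩
  rw [schurTilde, abs_div, schurL_eq_bialternant hpos Y.1]
  gcongr
  exact hC Y hY

lemma hasSum_linkPow_mul_schurTilde {ν : Fin K → ℤ} (hmono : Antitone ν) (hpos : ∀ i, 0 ≤ ν i)
    (d : ℕ) (X : Conf q zm zp (K + d)) :
    HasSum (fun Y => linkPow q zm zp K d X Y * schurTilde q K ν Y.1)
      (schurTilde q (K + d) (padSig K (K + d) ν) X.1) := by
  induction d with
  | zero =>
    simpa only [Nat.add_zero, padSig_self] using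
      hasSum_linkPow_zero_mul X fun Y => schurTilde q K ν Y.1
  | succ d ih =>
    obtain ⟨C, hC⟩ := exists_abs_schurTilde_le hq0 hq1 hzm hzp ‖X.1‖ hmono hpos
    exact (qlink_isStochastic hq0 hq1 hzm hzp (K + d)).hasSum_comp_mul
      (linkPow_isStochastic hq0 hq1 hzm hzp d)
      (fun Z Y hXZ hZY => hC Y
        ((norm_le_of_linkPow_ne_zero hZY).trans (norm_le_of_qlink_ne_zero hXZ)))
      ih (hasSum_qlink_mul_schurTilde hq0 hq1 hzm hzp (Nat.le_add_right K d) hpos X)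

end MultiStepLink

/-- Proposition 2.6(i): for N = K + d > K and X ∈ 𝔾_N fixed,
Σ_{Y ∈ 𝔾_K} Λ^N_K(X,Y) S̃_{ν|K}(Y) = S̃_{ν|N}(X) for all partitions ν ∈ 𝕐(K),
the series converging absolutely. -/
theorem link_schur_relation (q zm zp : ℝ) (hq0 : 0 < q) (hq1 : q < 1) (hzm : zm < 0)
    (hzp : 0 < zp) (K d : ℕ) (hK : 1 ≤ K) (hd : 1 ≤ d) (X : Conf q zm zp (K + d))
    (ν : Fin K → ℤ) (hmono : Antitone ν) (hpos : ∀ i, 0 ≤ ν i) :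
    Summable (fun Y : Conf q zm zp K =>
      |linkPow q zm zp K d X Y * schurTilde q K ν Y.1|) ∧
    ∑' Y : Conf q zm zp K, linkPow q zm zp K d X Y * schurTilde q K ν Y.1
      = schurTilde q (K + d) (padSig K (K + d) ν) X.1 := by
  have h := hasSum_linkPow_mul_schurTilde hq0 hq1 hzm hzp hmono hpos d X
  exact ⟨h.summable.abs, h.tsum_eq⟩

end
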